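/- Let 𝒜 be a reduced inverse automaton over Ã, let p, q be states of 𝒜 and let w be a nonempty reduced word over Ã. Let u be the longest prefix of w labeling a path in 𝒜 starting at p and let v be the longest suffix of w labeling a path in 𝒜 ending at q. Suppose |u| + |v| < |w|, so that w = u w' v with w' a nonempty reduced word, and let p' be the endpoint of the u-labeled path from p and q' the start of the v-labeled path into q. Then for every reduced inverse automaton 𝓑, 𝒜 →exp^{(p,w,q)} 𝓑 if and only if 𝒜 →exp^{(p',w',q')} 𝓑, and the latter is a reduced expansion 𝒜 →re^{(p',w',q')} 𝓑. -/

import Mathlib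

open Function

/-- A letter of the symmetrized alphabet Ã: `(a, true)` stands for `a ∈ A` and
`(a, false)` for `a⁻¹ ∈ A⁻¹`. -/
abbrev Ltr (A : Type) := A × Bool

/-- Inversion of letters of Ã. -/
def Ltr.inv {A : Type} (x : Ltr A) : Ltr A := (x.1, !x.2)

/-- The inverse `u⁻¹` of a word `u` over Ã. -/
def wordInv {A : Type} (w : List (Ltr A)) : List (Ltr A) := (w.map Ltr.inv).reverse

/-- A word over Ã is reduced iff it has no factor of the form `a a⁻¹` or `a⁻¹ a`. -/
def IsReducedWord {A : Type} (w : List (Ltr A)) : Prop :=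
  ∀ (u v : List (Ltr A)) (a : A) (b : Bool), w ≠ u ++ (a, b) :: (a, !b) :: v

/-- An automaton over the symmetrized alphabet Ã, with a bundled state type `Q`,
an initial state `q0` and a set `E` of transitions. -/
structure Autom (A : Type) : Type 1 where
  Q : Type
  q0 : Q
  E : Set (Q × Ltr A × Q)

namespace Autom

variable {A : Type}

/-- Paths using only transitions in the set `T`. -/
inductive PathOn (M : Autom A) (T : Set (M.Q × Ltr A × M.Q)) :
    M.Q → List (Ltr A) → M.Q → Prop
  | nil (q : M.Q) : PathOn M T q [] q
  | cons {p q r : M.Q} {a : Ltr A} {w : List (Ltr A)} :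
      (p, a, q) ∈ T → PathOn M T q w r → PathOn M T p (a :: w) r

/-- `M.Path p u q` : the word `u` labels a path from state `p` to state `q` in `M`. -/
def Path (M : Autom A) : M.Q → List (Ltr A) → M.Q → Prop := M.PathOn M.E

/-- The language L(𝒜) of words labeling a path from `q0` to `q0`. -/
def lang (M : Autom A) : Set (List (Ltr A)) := {w | M.Path M.q0 w M.q0}

/-- The set L(𝒜)ρ of reductions (in the free group `F(A)`) of words of L(𝒜). -/
def langRho (M : Autom A) : Set (FreeGroup A) := FreeGroup.mk '' M.lang

/-- Dual automaton: `(p,a,q)` is an edge iff `(q,a⁻¹,p)` is one. -/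
def Dual (M : Autom A) : Prop := ∀ p a q, (p, a, q) ∈ M.E ↔ (q, Ltr.inv a, p) ∈ M.E

/-- Deterministic automaton. -/
def Deterministic (M : Autom A) : Prop :=
  ∀ p a q q', (p, a, q) ∈ M.E → (p, a, q') ∈ M.E → q = q'

/-- Trim automaton: every state lies on a path from `q0` to `q0`. -/
def Trim (M : Autom A) : Prop := ∀ q, ∃ u v, M.Path M.q0 u q ∧ M.Path q v M.q0

/-- Inverse automaton: deterministic, trim and dual. -/
def IsInv (M : Autom A) : Prop := M.Deterministic ∧ M.Trim ∧ M.Dual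

/-- Reduced automaton: every state lies on a path from `q0` to `q0` labeled by
a reduced word. -/
def IsRed (M : Autom A) : Prop :=
  ∀ q, ∃ u v, IsReducedWord (u ++ v) ∧ M.Path M.q0 u q ∧ M.Path q v M.q0

/-- Homomorphisms of automata. -/
def IsHom (M N : Autom A) (φ : M.Q → N.Q) : Prop :=
  φ M.q0 = N.q0 ∧ ∀ p a q, (p, a, q) ∈ M.E → (φ p, a, φ q) ∈ N.E

/-- Isomorphism of automata. -/
def Isomorphic (M N : Autom A) : Prop :=
  ∃ φ : M.Q ≃ N.Q, M.IsHom N φ ∧ N.IsHom M φ.symm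

/-- `N` is (isomorphic to) the automaton obtained from `M` by identifying the two
states `p` and `q`. -/
def IsIdentification (M : Autom A) (p q : M.Q) (N : Autom A) : Prop :=
  ∃ φ : M.Q → N.Q,
    Surjective φ ∧ φ M.q0 = N.q0 ∧
    (∀ x y, φ x = φ y ↔ x = y ∨ (x = p ∧ y = q) ∨ (x = q ∧ y = p)) ∧
    (∀ e : N.Q × Ltr A × N.Q, e ∈ N.E ↔ ∃ e' ∈ M.E, e = (φ e'.1, e'.2.1, φ e'.2.2))

/-- `N` is (isomorphic to) the automaton obtained from `M` by deleting the state `q`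
and all transitions involving it. -/
def IsDeletion (M : Autom A) (q : M.Q) (N : Autom A) : Prop :=
  ∃ φ : N.Q → M.Q,
    Injective φ ∧ Set.range φ = {x | x ≠ q} ∧ φ N.q0 = M.q0 ∧
    (∀ e : N.Q × Ltr A × N.Q, e ∈ N.E ↔ (φ e.1, e.2.1, φ e.2.2) ∈ M.E)

/-- Elementary reduction of type 1. -/
def Red1 (M N : Autom A) : Prop :=
  ∃ p q r a, p ≠ q ∧ (r, a, p) ∈ M.E ∧ (r, a, q) ∈ M.E ∧ M.IsIdentification p q N

/-- Elementary reduction of type 2. -/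
def Red2 (M N : Autom A) : Prop :=
  ∃ (p q : M.Q) (a : Ltr A), q ≠ M.q0 ∧ (p, a, q) ∈ M.E ∧ (q, Ltr.inv a, p) ∈ M.E ∧
    (∀ e ∈ M.E, e.1 = q ∨ e.2.2 = q → e = (p, a, q) ∨ e = (q, Ltr.inv a, p)) ∧
    M.IsDeletion q N

/-- `N` is (isomorphic to) the reduction `Mρ` of `M`: perform elementary reductions
of type 1 until the automaton is deterministic, then elementary reductions of type 2
until none is possible. -/
def ReductionOf (M N : Autom A) : Prop :=
  ∃ M₁, Relation.ReflTransGen Red1 M M₁ ∧ M₁.Deterministic ∧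
    Relation.ReflTransGen Red2 M₁ N ∧ ∀ N', ¬ Red2 N N'

/-- `N` is (isomorphic to) the expansion of `M` by `(p, w, q)`: a new path labeled `w`
from `p` to `q` (together with its inverse path) whose intermediate states are new. -/
def IsExpansion (M : Autom A) (p : M.Q) (w : List (Ltr A)) (q : M.Q) (N : Autom A) : Prop :=
  w ≠ [] ∧
  ∃ (φ : M.Q → N.Q) (c : Fin (w.length + 1) → N.Q),
    Injective φ ∧ φ M.q0 = N.q0 ∧ c 0 = φ p ∧ c (Fin.last w.length) = φ q ∧
    (∀ i : Fin (w.length + 1), 0 < (i : ℕ) → (i : ℕ) < w.length → c i ∉ Set.range φ) ∧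
    (∀ i j : Fin (w.length + 1), 0 < (i : ℕ) → (i : ℕ) < w.length → c i = c j → i = j) ∧
    (∀ x : N.Q, (∃ y, φ y = x) ∨ ∃ i, c i = x) ∧
    (∀ e : N.Q × Ltr A × N.Q, e ∈ N.E ↔
      ((∃ e' ∈ M.E, e = (φ e'.1, e'.2.1, φ e'.2.2)) ∨
        ∃ i : Fin w.length,
          e = (c i.castSucc, w.get i, c i.succ) ∨
          e = (c i.succ, Ltr.inv (w.get i), c i.castSucc)))

/-- `M →exp^{(p,w,q)} N` : `N` is (isomorphic to) the reduction of the expansion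
of `M` by `(p,w,q)`. -/
def ExpStep (M : Autom A) (p : M.Q) (w : List (Ltr A)) (q : M.Q) (N : Autom A) : Prop :=
  ∃ N' N'', M.IsExpansion p w q N' ∧ ReductionOf N' N'' ∧ Isomorphic N'' N

/-- `M →re^{(p,w,q)} N` : a reduced expansion, i.e. an expansion-then-reduction in which
`M` embeds in `N`. -/
def REStep (M : Autom A) (p : M.Q) (w : List (Ltr A)) (q : M.Q) (N : Autom A) : Prop :=
  M.ExpStep p w q N ∧ ∃ ψ : M.Q → N.Q, Injective ψ ∧ M.IsHom N ψ

/-- `M →e^{w} N` : an e-step, i.e. `M →exp^{(q0,w,q0)} N`. -/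
def EStep (M : Autom A) (w : List (Ltr A)) (N : Autom A) : Prop :=
  M.ExpStep M.q0 w M.q0 N

/-- `M →i^{p=q} N` : an i-step; `N` is (isomorphic to) the reduction of the automaton
obtained from `M` by identifying the distinct states `p` and `q`. -/
def IStep (M : Autom A) (p q : M.Q) (N : Autom A) : Prop :=
  p ≠ q ∧ ∃ N' N'', M.IsIdentification p q N' ∧ ReductionOf N' N'' ∧ Isomorphic N'' N

/-- i-step, allowing `p = q` (in which case nothing happens). -/
def IStep' (M : Autom A) (p q : M.Q) (N : Autom A) : Prop :=
  (p = q ∧ M.Isomorphic N) ∨ M.IStep p q N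

/-- `M →i N` : some i-step applies. -/
def IStepAny (M N : Autom A) : Prop := ∃ p q, M.IStep p q N

/-- Some reduced expansion (by a nonempty reduced word) applies. -/
def REStepAny (M N : Autom A) : Prop :=
  ∃ p w q, IsReducedWord w ∧ M.REStep p w q N

/-- `M` is (isomorphic to) `Γ_A(H)` : a reduced inverse automaton with `L(M)ρ = H`. -/
def Represents (M : Autom A) (H : Subgroup (FreeGroup A)) : Prop :=
  M.IsInv ∧ M.IsRed ∧ M.langRho = ↑H

/-- The `q0`-diameter of an automaton: the maximum over all states `q` of the minimal
length of a reduced word labeling a path from `q0` to `q`. -/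
noncomputable def diam (M : Autom A) : ℕ :=
  ⨆ q : M.Q, sInf {n | ∃ u, IsReducedWord u ∧ u.length = n ∧ M.Path M.q0 u q}

end Autom

/-- `S` is a basis of the subgroup `H`: `S` generates `H` and freely so. -/
def IsFreeBasis {G : Type} [Group G] (S : Set G) (H : Subgroup G) : Prop :=
  Subgroup.closure S = H ∧
    Injective (FreeGroup.lift (Subtype.val : S → G) : FreeGroup S →* G)

/-- `H ≤ff K` : `H` is a free factor of `K`. -/
def FreeFactor {G : Type} [Group G] (H K : Subgroup G) : Prop :=
  ∃ B C : Set G, IsFreeBasis B H ∧ IsFreeBasis C K ∧ B ⊆ C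

/-- The rank of a subgroup: the cardinality of a basis (the common value of
the cardinalities of all bases, when `H` is a finite-rank free group). -/
noncomputable def rk {G : Type} [Group G] (H : Subgroup G) : ℕ :=
  sInf {n | ∃ S : Set G, IsFreeBasis S H ∧ S.ncard = n}

/-- `L` is a graphical free factor of `K` with respect to `A`: `Γ_A(L)` embeds
in `Γ_A(K)`. -/
def GraphicalFF {A : Type} (L K : Subgroup (FreeGroup A)) : Prop :=
  L ≤ K ∧ ∃ ML MK : Autom A, ML.Represents L ∧ MK.Represents K ∧
    ∃ ψ : ML.Q → MK.Q, Injective ψ ∧ ML.IsHom MK ψ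

/-- A step (i-step or reduced expansion) from `M` to `N` of cost `c`. -/
def StepCost {A : Type} (M N : Autom A) (c : ℕ) : Prop :=
  (c = 0 ∧ Autom.IStepAny M N) ∨
  (∃ p w q, IsReducedWord w ∧ w.length = c ∧ M.REStep p w q N)

/-- The well-order `≺` on cost sequences. -/
def costLT (k l : List ℕ) : Prop :=
  k.length < l.length ∨
  (k.length = l.length ∧ k.sum < l.sum) ∨
  (k.length = l.length ∧ k.sum = l.sum ∧ List.Lex (· < ·) k l)

/-!
Folding an expansion of `M` by `(p, w, q)` produces the universal deterministic dual automaton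
under `M` with a `w`-path from the image of `p` to the image of `q`. In a deterministic dual
automaton the readable prefix `u` and suffix `v` already have unique lifts, so the universal
problems for `(p, u w' v, q)` and `(p', w', q')` coincide, and so do the two folded automata, hence
their reductions. When `w'` cannot be shortened, attaching it to `M` one letter at a time gives a
deterministic dual automaton containing `M`, so by universality `M` embeds in the folded expansion.
Type 2 reductions then spare `M`, as each of its states is passed by a reduced path.
-/

/-! ### Non-injectivity sets -/

/-- The points that `f` identifies with another point. Its finiteness measures how much folding is
left to do along a homomorphism from a possibly infinite automaton. -/
def collapsedSet {α β : Type*} (f : α → β) : Set α := {x | ∃ y, y ≠ x ∧ f y = f x}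

section collapsedSet

variable {α β γ : Type*}

theorem collapsedSet_eq_empty {f : α → β} (hf : Injective f) : collapsedSet f = ∅ :=
  Set.eq_empty_iff_forall_notMem.2 fun _ ⟨_, hne, h⟩ => hne (hf h)

theorem injOn_compl_collapsedSet (f : α → β) : Set.InjOn f (collapsedSet f)ᶜ := fun x _ _ hy h =>
  by_contra fun hne => hy ⟨x, hne, h⟩

theorem finite_preimage_of_finite_collapsedSet {f : α → β} (hf : (collapsedSet f).Finite)
    {s : Set β} (hs : s.Finite) : (f ⁻¹' s).Finite := by
  have hinj : (f ⁻¹' s \ collapsedSet f).Finite :=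
    Set.Finite.of_injOn (f := f) (fun _ hx => hx.1)
      ((injOn_compl_collapsedSet f).mono fun _ hx => hx.2) hs
  exact hinj.of_sdiff hf

theorem finite_collapsedSet_comp {f : α → β} {g : β → γ} (hf : (collapsedSet f).Finite)
    (hg : (collapsedSet g).Finite) : (collapsedSet (g ∘ f)).Finite := by
  refine (hf.union (finite_preimage_of_finite_collapsedSet hf hg)).subset ?_
  rintro x ⟨y, hne, hxy⟩
  by_cases h : f y = f x
  · exact .inl ⟨y, hne, h⟩
  · exact .inr ⟨f y, h, hxy⟩

theorem finite_collapsedSet_of_comp {f : α → β} {g : β → γ} (hf : (Set.range f)ᶜ.Finite)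
    (hgf : (collapsedSet (g ∘ f)).Finite) : (collapsedSet g).Finite := by
  have hpre := finite_preimage_of_finite_collapsedSet hgf (hf.image g)
  refine (hf.union ((hgf.union hpre).image f)).subset ?_
  rintro x ⟨y, hne, hyx⟩
  by_cases hx : x ∈ Set.range f
  · obtain ⟨m, rfl⟩ := hx
    refine .inr ⟨m, ?_, rfl⟩
    by_cases hy : y ∈ Set.range f
    · obtain ⟨k, rfl⟩ := hy
      exact .inl ⟨k, fun h => hne (congrArg f h), hyx⟩
    · exact .inr ⟨y, hy, hyx⟩
  · exact .inl hx

theorem ncard_collapsedSet_lt {π : α → β} {h : β → γ} {x y : α}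
    (hπ : Surjective π) (hne : x ≠ y) (hxy : π x = π y) (hfin : (collapsedSet (h ∘ π)).Finite) :
    (collapsedSet h).ncard < (collapsedSet (h ∘ π)).ncard := by
  have hx : x ∈ collapsedSet (h ∘ π) := ⟨y, hne.symm, congrArg h hxy.symm⟩
  have hy : y ∈ collapsedSet (h ∘ π) := ⟨x, hne, congrArg h hxy⟩
  have hsub : collapsedSet h ⊆ π '' (collapsedSet (h ∘ π) \ {x}) := by
    rintro z ⟨t, htz, hh⟩
    obtain ⟨s, rfl⟩ := hπ z
    obtain ⟨t, rfl⟩ := hπ t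
    by_cases hsx : s = x
    · exact ⟨y, ⟨hy, hne.symm⟩, by rw [← hxy, hsx]⟩
    · exact ⟨s, ⟨⟨t, fun hts => htz (congrArg π hts), hh⟩, hsx⟩, rfl⟩
  calc (collapsedSet h).ncard
      ≤ (π '' (collapsedSet (h ∘ π) \ {x})).ncard :=
        Set.ncard_le_ncard hsub (hfin.sdiff.image _)
    _ ≤ (collapsedSet (h ∘ π) \ {x}).ncard := Set.ncard_image_le hfin.sdiff
    _ < (collapsedSet (h ∘ π)).ncard := Set.ncard_sdiff_singleton_lt_of_mem hx hfin

end collapsedSet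

/-! ### Letters, reduced words and paths -/

theorem Ltr.inv_inv {A : Type} (a : Ltr A) : a.inv.inv = a := by
  simp [Ltr.inv]

theorem Ltr.inv_ne {A : Type} (a : Ltr A) : a.inv ≠ a := fun h => by
  simpa [Ltr.inv] using congrArg Prod.snd h

theorem IsReducedWord.of_isInfix {A : Type} {w y : List (Ltr A)} (h : IsReducedWord w)
    (hy : y <:+: w) : IsReducedWord y := by
  rintro s t a b rfl
  obtain ⟨x, z, rfl⟩ := hy
  exact h (x ++ s) (t ++ z) a b (by simp)

theorem IsReducedWord.ne_inv {A : Type} {x y : List (Ltr A)} {a b : Ltr A}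
    (h : IsReducedWord (x ++ a :: b :: y)) : b ≠ a.inv := by
  rintro rfl
  exact h x y a.1 a.2 rfl

namespace Autom

variable {A : Type} {M N K : Autom A} {p q p' q' : M.Q} {u v w : List (Ltr A)}

theorem Path.append {r : M.Q} (h : M.Path p u r) (h' : M.Path r v q) : M.Path p (u ++ v) q := by
  unfold Path at h
  induction h with
  | nil => exact h'
  | cons he _ ih => exact .cons he (ih h')

theorem path_append : M.Path p (u ++ v) q ↔ ∃ r, M.Path p u r ∧ M.Path r v q := by
  refine ⟨fun h => ?_, fun ⟨_, hu, hv⟩ => hu.append hv⟩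
  induction u generalizing p with
  | nil => exact ⟨p, .nil p, h⟩
  | cons a u ih =>
    obtain _ | ⟨he, hp⟩ := h
    obtain ⟨r, hu, hv⟩ := ih hp
    exact ⟨r, .cons he hu, hv⟩

theorem path_singleton {a : Ltr A} : M.Path p [a] q ↔ (p, a, q) ∈ M.E := by
  refine ⟨fun h => ?_, fun h => .cons h (.nil _)⟩
  obtain _ | ⟨he, ⟨⟩⟩ := h
  exact he

theorem Path.map {f : M.Q → N.Q} (hf : M.IsHom N f) (h : M.Path p w q) :
    N.Path (f p) w (f q) := by
  unfold Path at h
  induction h with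
  | nil q => exact .nil _
  | cons he _ ih => exact .cons (hf.2 _ _ _ he) ih

theorem Path.target_unique (hd : M.Deterministic) (h : M.Path p w q) (h' : M.Path p w q') :
    q = q' := by
  unfold Path at h
  induction h with
  | nil q => cases h'; rfl
  | cons he _ ih =>
    obtain _ | ⟨he', hp'⟩ := h'
    obtain rfl := hd _ _ _ _ he he'
    exact ih hp'

theorem Path.source_unique (hd : M.Deterministic) (hdual : M.Dual) (h : M.Path p w q)
    (h' : M.Path p' w q) : p = p' := by
  unfold Path at h
  induction h generalizing p' with
  | nil q => cases h'; rfl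
  | cons he _ ih =>
    obtain _ | ⟨he', hp'⟩ := h'
    obtain rfl := ih hp'
    exact hd _ _ _ _ ((hdual _ _ _).1 he) ((hdual _ _ _).1 he')

theorem path_append_append_iff (hd : M.Deterministic) (hdual : M.Dual) (hu : M.Path p u p')
    (hv : M.Path q' v q) : M.Path p (u ++ w ++ v) q ↔ M.Path p' w q' := by
  refine ⟨fun h => ?_, fun h => (hu.append h).append hv⟩
  obtain ⟨y, huw, hv'⟩ := path_append.1 h
  obtain ⟨x, hu', hw⟩ := path_append.1 huw
  rwa [hu.target_unique hd hu', hv.source_unique hd hdual hv']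

theorem path_iff_exists_fin :
    M.Path p w q ↔ ∃ d : Fin (w.length + 1) → M.Q, d 0 = p ∧ d (Fin.last _) = q ∧
      ∀ i : Fin w.length, (d i.castSucc, w.get i, d i.succ) ∈ M.E := by
  constructor
  · intro h
    unfold Path at h
    induction h with
    | nil q => exact ⟨fun _ => q, rfl, rfl, nofun⟩
    | @cons p _ _ a w he _ ih =>
      obtain ⟨d, rfl, rfl, hd⟩ := ih
      exact ⟨Fin.cons p d, rfl, rfl, Fin.cases he hd⟩
  · rintro ⟨d, rfl, rfl, hd⟩
    induction w with
    | nil => exact .nil _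
    | cons a w ih => exact .cons (hd 0) (ih (Fin.tail d) fun i => hd i.succ)

theorem Path.exists_edge_ne (h : M.Path p w q) (hpq : p ≠ q) :
    ∃ r a, r ≠ q ∧ (r, a, q) ∈ M.E := by
  unfold Path at h
  induction h with
  | nil => exact absurd rfl hpq
  | @cons p r q a _ he _ ih =>
    by_cases hrq : r = q
    · exact ⟨p, a, hpq, hrq ▸ he⟩
    · exact ih hrq

theorem dual_of_forall (h : ∀ p a q, (p, a, q) ∈ M.E → (q, a.inv, p) ∈ M.E) : M.Dual :=
  fun p a q => ⟨h p a q, fun hq => a.inv_inv ▸ h _ _ _ hq⟩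

/-! ### Homomorphisms, isomorphisms and quotients -/

theorem IsHom.id (M : Autom A) : M.IsHom M id := ⟨rfl, fun _ _ _ h => h⟩

theorem IsHom.comp {f : M.Q → N.Q} {g : N.Q → K.Q} (hg : N.IsHom K g) (hf : M.IsHom N f) :
    M.IsHom K (g ∘ f) :=
  ⟨(congrArg g hf.1).trans hg.1, fun _ _ _ h => hg.2 _ _ _ (hf.2 _ _ _ h)⟩

theorem Isomorphic.refl (M : Autom A) : Isomorphic M M := ⟨Equiv.refl _, IsHom.id M, IsHom.id M⟩

theorem Isomorphic.symm (h : Isomorphic M N) : Isomorphic N M :=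
  let ⟨φ, hφ, hφ'⟩ := h
  ⟨φ.symm, hφ', hφ⟩

theorem Isomorphic.trans (h : Isomorphic M N) (h' : Isomorphic N K) : Isomorphic M K :=
  let ⟨φ, hφ, hφ'⟩ := h
  let ⟨ψ, hψ, hψ'⟩ := h'
  ⟨φ.trans ψ, hψ.comp hφ, hφ'.comp hψ'⟩

/-- `π` exhibits `N` as a quotient automaton of `M`: it is onto on states and on transitions, so a
homomorphism out of `M` descends to `N` as soon as its underlying map does. -/
structure IsQuotientMap (M N : Autom A) (π : M.Q → N.Q) : Prop where
  surjective : Surjective π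
  map_q0 : π M.q0 = N.q0
  mem_iff : ∀ e : N.Q × Ltr A × N.Q, e ∈ N.E ↔ ∃ e' ∈ M.E, e = (π e'.1, e'.2.1, π e'.2.2)

namespace IsQuotientMap

theorem id (M : Autom A) : M.IsQuotientMap M id where
  surjective := surjective_id
  map_q0 := rfl
  mem_iff _ := by simp

variable {π : M.Q → N.Q}

theorem comp {σ : N.Q → K.Q} (hσ : N.IsQuotientMap K σ) (hπ : M.IsQuotientMap N π) :
    M.IsQuotientMap K (σ ∘ π) where
  surjective := hσ.surjective.comp hπ.surjective
  map_q0 := (congrArg σ hπ.map_q0).trans hσ.map_q0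
  mem_iff e := by
    rw [hσ.mem_iff]
    constructor
    · rintro ⟨e', he', rfl⟩
      obtain ⟨e'', he'', rfl⟩ := (hπ.mem_iff _).1 he'
      exact ⟨e'', he'', rfl⟩
    · rintro ⟨e'', he'', rfl⟩
      exact ⟨_, (hπ.mem_iff _).2 ⟨e'', he'', rfl⟩, rfl⟩

theorem isHom (hπ : M.IsQuotientMap N π) : M.IsHom N π :=
  ⟨hπ.map_q0, fun _ _ _ h => (hπ.mem_iff _).2 ⟨_, h, rfl⟩⟩

theorem dual (hπ : M.IsQuotientMap N π) (hM : M.Dual) : N.Dual := by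
  refine dual_of_forall fun p a q h => ?_
  obtain ⟨⟨x, b, y⟩, he, ⟨⟩⟩ := (hπ.mem_iff _).1 h
  exact hπ.isHom.2 _ _ _ ((hM _ _ _).1 he)

theorem exists_lift (hπ : M.IsQuotientMap N π) {g : M.Q → K.Q} (hg : M.IsHom K g)
    (hfac : g.FactorsThrough π) : ∃ h : N.Q → K.Q, N.IsHom K h ∧ h ∘ π = g := by
  have : Nonempty K.Q := ⟨K.q0⟩
  obtain ⟨h, rfl⟩ := (factorsThrough_iff g).1 hfac
  refine ⟨h, ⟨hπ.map_q0 ▸ hg.1, fun p a q he => ?_⟩, rfl⟩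
  obtain ⟨⟨x, b, y⟩, he', ⟨⟩⟩ := (hπ.mem_iff _).1 he
  exact hg.2 _ _ _ he'

end IsQuotientMap

/-! ### Folding -/

theorem exists_isIdentification (M : Autom A) (p q : M.Q) : ∃ N, M.IsIdentification p q N := by
  let s : Setoid M.Q :=
    { r := fun x y => x = y ∨ (x = p ∧ y = q) ∨ (x = q ∧ y = p)
      iseqv := ⟨fun _ => .inl rfl, by grind, by grind⟩ }
  exact ⟨⟨Quotient s, Quotient.mk s M.q0,
    {e | ∃ e' ∈ M.E, e = (Quotient.mk s e'.1, e'.2.1, Quotient.mk s e'.2.2)}⟩,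
    Quotient.mk s, Quotient.mk_surjective, rfl, fun _ _ => Quotient.eq (r := s), fun _ => Iff.rfl⟩

/-- `π` exhibits `K` as a folding of `E`: a quotient making finitely many identifications, all of
them forced in every deterministic image of `E`. -/
structure IsFolding (E K : Autom A) (π : E.Q → K.Q) : Prop extends E.IsQuotientMap K π where
  factorsThrough : ∀ {P : Autom A} {g : E.Q → P.Q}, P.Deterministic → E.IsHom P g →
    g.FactorsThrough π
  finite : (collapsedSet π).Finite

section Folding

variable {E P : Autom A}

theorem IsFolding.id (E : Autom A) : E.IsFolding E id where
  toIsQuotientMap := .id E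
  factorsThrough _ _ := injective_id.factorsThrough _
  finite := by simp [collapsedSet_eq_empty injective_id]

theorem IsFolding.comp {π : E.Q → K.Q} {σ : K.Q → N.Q} (hσ : K.IsFolding N σ)
    (hπ : E.IsFolding K π) : E.IsFolding N (σ ∘ π) where
  toIsQuotientMap := hσ.toIsQuotientMap.comp hπ.toIsQuotientMap
  factorsThrough hP hg := by
    obtain ⟨h, hh, rfl⟩ := hπ.exists_lift hg (hπ.factorsThrough hP hg)
    exact (hσ.factorsThrough hP hh).comp_right π
  finite := finite_collapsedSet_comp hπ.finite hσ.finite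

theorem IsIdentification.exists_isFolding {r x y : E.Q} {a : Ltr A} (hx : (r, a, x) ∈ E.E)
    (hy : (r, a, y) ∈ E.E) (h : E.IsIdentification x y K) :
    ∃ π : E.Q → K.Q, E.IsFolding K π ∧ π x = π y := by
  obtain ⟨π, hsurj, hq0, hker, hE⟩ := h
  refine ⟨π, ⟨⟨hsurj, hq0, hE⟩, fun hP hg s t hst => ?_, ?_⟩, (hker x y).2 (.inr (.inl ⟨rfl, rfl⟩))⟩
  · have hxy := hP _ _ _ _ (hg.2 _ _ _ hx) (hg.2 _ _ _ hy)
    obtain rfl | ⟨rfl, rfl⟩ | ⟨rfl, rfl⟩ := (hker s t).1 hst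
    exacts [rfl, hxy, hxy.symm]
  · refine (Set.toFinite {x, y}).subset ?_
    rintro s ⟨t, hts, hπ⟩
    obtain rfl | ⟨-, rfl⟩ | ⟨-, rfl⟩ := (hker t s).1 hπ <;> simp_all

theorem exists_isFolding_of_red1 (h : Relation.ReflTransGen Red1 E K) :
    ∃ π : E.Q → K.Q, E.IsFolding K π := by
  induction h with
  | refl => exact ⟨_, .id E⟩
  | tail _ h ih =>
    obtain ⟨π, hπ⟩ := ih
    obtain ⟨x, y, r, a, -, hx, hy, hid⟩ := h
    obtain ⟨σ, hσ, -⟩ := hid.exists_isFolding hx hy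
    exact ⟨σ ∘ π, hσ.comp hπ⟩

theorem exists_red1_deterministic {g : E.Q → P.Q} (hP : P.Deterministic) (hg : E.IsHom P g)
    (hfin : (collapsedSet g).Finite) :
    ∃ K, Relation.ReflTransGen Red1 E K ∧ K.Deterministic := by
  induction hn : (collapsedSet g).ncard using Nat.strong_induction_on generalizing E with
  | _ n ih =>
    by_cases hd : E.Deterministic
    · exact ⟨E, .refl, hd⟩
    unfold Deterministic at hd
    push Not at hd
    obtain ⟨r, a, x, y, hx, hy, hne⟩ := hd
    obtain ⟨E', hid⟩ := exists_isIdentification E x y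
    obtain ⟨π, hπ, hxy⟩ := hid.exists_isFolding hx hy
    obtain ⟨h, hh, rfl⟩ := hπ.exists_lift hg (hπ.factorsThrough hP hg)
    have hlt := ncard_collapsedSet_lt hπ.surjective hne hxy hfin
    have hfin' : (collapsedSet h).Finite :=
      finite_collapsedSet_of_comp (by simp [hπ.surjective.range_eq]) hfin
    obtain ⟨K, hE'K, hK⟩ := ih _ (hn ▸ hlt) hh hfin' rfl
    exact ⟨K, .head ⟨x, y, r, a, hne, hx, hy, hid⟩ hE'K, hK⟩

end Folding

/-! ### The universal property of a folded expansion -/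

/-- The universal property of freely adjoining to `M` a path labeled `w` from `p` to `q`, tested
only against deterministic dual automata; `E` itself need not be deterministic. -/
structure IsPathAdjunction (M : Autom A) (p : M.Q) (w : List (Ltr A)) (q : M.Q) (E : Autom A)
    (φ : M.Q → E.Q) : Prop where
  isHom : M.IsHom E φ
  dual : E.Dual
  path : E.Path (φ p) w (φ q)
  exists_lift : ∀ {P : Autom A} {ψ : M.Q → P.Q}, P.Deterministic → P.Dual → M.IsHom P ψ →
    P.Path (ψ p) w (ψ q) → ∃ g : E.Q → P.Q, E.IsHom P g ∧ g ∘ φ = ψ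
  hom_ext : ∀ {P : Autom A} {g₁ g₂ : E.Q → P.Q}, P.Deterministic → E.IsHom P g₁ →
    E.IsHom P g₂ → g₁ ∘ φ = g₂ ∘ φ → g₁ = g₂

namespace IsPathAdjunction

variable {E L : Autom A} {φ : M.Q → E.Q}

theorem comp_isFolding {π : E.Q → K.Q} (hφ : M.IsPathAdjunction p w q E φ)
    (hπ : E.IsFolding K π) : M.IsPathAdjunction p w q K (π ∘ φ) where
  isHom := hπ.isHom.comp hφ.isHom
  dual := hπ.dual hφ.dual
  path := hφ.path.map (f := π) hπ.isHom
  exists_lift hP hPdual hψ hpath := by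
    obtain ⟨g, hg, rfl⟩ := hφ.exists_lift hP hPdual hψ hpath
    obtain ⟨h, hh, rfl⟩ := hπ.exists_lift hg (hπ.factorsThrough hP hg)
    exact ⟨h, hh, rfl⟩
  hom_ext hP h₁ h₂ heq :=
    hπ.surjective.injective_comp_right
      (hφ.hom_ext hP (h₁.comp hπ.isHom) (h₂.comp hπ.isHom) heq)

theorem isomorphic {ψ : M.Q → L.Q} (hφ : M.IsPathAdjunction p w q E φ) (hE : E.Deterministic)
    (hψ : M.IsPathAdjunction p w q L ψ) (hL : L.Deterministic) : Isomorphic E L := by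
  obtain ⟨g, hg, hgφ⟩ := hφ.exists_lift hL hψ.dual hψ.isHom hψ.path
  obtain ⟨h, hh, hhψ⟩ := hψ.exists_lift hE hφ.dual hφ.isHom hφ.path
  have hhg : h ∘ g = id := hφ.hom_ext hE (hh.comp hg) (.id E)
    (by rw [comp_assoc, hgφ, hhψ, id_comp])
  have hgh : g ∘ h = id := hψ.hom_ext hL (hg.comp hh) (.id L)
    (by rw [comp_assoc, hhψ, hgφ, id_comp])
  exact ⟨⟨g, h, congrFun hhg, congrFun hgh⟩, hg, hh⟩

theorem congr {p₁ q₁ : M.Q} {w₁ : List (Ltr A)} (hφ : M.IsPathAdjunction p w q E φ)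
    (hE : E.Deterministic)
    (hpath : ∀ {P : Autom A} {ψ : M.Q → P.Q}, P.Deterministic → P.Dual → M.IsHom P ψ →
      (P.Path (ψ p) w (ψ q) ↔ P.Path (ψ p₁) w₁ (ψ q₁))) :
    M.IsPathAdjunction p₁ w₁ q₁ E φ where
  isHom := hφ.isHom
  dual := hφ.dual
  path := (hpath hE hφ.dual hφ.isHom).1 hφ.path
  exists_lift hP hPdual hψ h := hφ.exists_lift hP hPdual hψ ((hpath hP hPdual hψ).2 h)
  hom_ext := hφ.hom_ext

end IsPathAdjunction

/-! ### Expansions -/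

/-- The body of `IsExpansion` with its two witnesses as parameters: `φ` includes `M` in `E`, and `c`
lists the states of the new path. -/
structure IsExpansionVia (M : Autom A) (p : M.Q) (w : List (Ltr A)) (q : M.Q) (E : Autom A)
    (φ : M.Q → E.Q) (c : Fin (w.length + 1) → E.Q) : Prop where
  injective : Injective φ
  map_q0 : φ M.q0 = E.q0
  c_zero : c 0 = φ p
  c_last : c (Fin.last w.length) = φ q
  c_notMem_range : ∀ i : Fin (w.length + 1), 0 < (i : ℕ) → (i : ℕ) < w.length →
    c i ∉ Set.range φ
  c_inj : ∀ i j : Fin (w.length + 1), 0 < (i : ℕ) → (i : ℕ) < w.length → c i = c j → i = j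
  cover : ∀ x : E.Q, (∃ y, φ y = x) ∨ ∃ i, c i = x
  mem_iff : ∀ e : E.Q × Ltr A × E.Q, e ∈ E.E ↔
    ((∃ e' ∈ M.E, e = (φ e'.1, e'.2.1, φ e'.2.2)) ∨
      ∃ i : Fin w.length,
        e = (c i.castSucc, w.get i, c i.succ) ∨
        e = (c i.succ, Ltr.inv (w.get i), c i.castSucc))

theorem IsExpansion.exists_via {E : Autom A} (h : M.IsExpansion p w q E) :
    ∃ φ c, M.IsExpansionVia p w q E φ c := by
  obtain ⟨-, φ, c, h₁, h₂, h₃, h₄, h₅, h₆, h₇, h₈⟩ := h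
  exact ⟨φ, c, h₁, h₂, h₃, h₄, h₅, h₆, h₇, h₈⟩

theorem exists_isExpansion (M : Autom A) (p q : M.Q) (hw : w ≠ []) :
    ∃ E, M.IsExpansion p w q E := by
  have hlen : 0 < w.length := List.length_pos_iff.2 hw
  let c : Fin (w.length + 1) → M.Q ⊕ {i : Fin (w.length + 1) // 0 < (i : ℕ) ∧ (i : ℕ) < w.length} :=
    fun i => if h : 0 < (i : ℕ) ∧ (i : ℕ) < w.length then .inr ⟨i, h⟩
      else if (i : ℕ) = 0 then .inl p else .inl q
  have hc (i : Fin (w.length + 1)) (h₀ : 0 < (i : ℕ)) (h₁ : (i : ℕ) < w.length) :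
      c i = .inr ⟨i, h₀, h₁⟩ := dif_pos ⟨h₀, h₁⟩
  refine ⟨⟨_, .inl M.q0, {e | (∃ e' ∈ M.E, e = (.inl e'.1, e'.2.1, .inl e'.2.2)) ∨
      ∃ i : Fin w.length, e = (c i.castSucc, w.get i, c i.succ) ∨
        e = (c i.succ, Ltr.inv (w.get i), c i.castSucc)}⟩, hw, Sum.inl, c,
    Sum.inl_injective, rfl, by simp [c], by simp [c, hlen.ne'], ?_, ?_, ?_, fun _ => Iff.rfl⟩
  · intro i h₀ h₁
    simp [hc i h₀ h₁]
  · intro i j h₀ h₁ hij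
    rw [hc i h₀ h₁] at hij
    by_cases hj : 0 < (j : ℕ) ∧ (j : ℕ) < w.length
    · simpa [hc j hj.1 hj.2] using hij
    · simp only [c, dif_neg hj] at hij
      split_ifs at hij
  · rintro (x | ⟨i, h₀, h₁⟩)
    · exact .inl ⟨x, rfl⟩
    · exact .inr ⟨i, hc i h₀ h₁⟩

namespace IsExpansionVia

variable {E : Autom A} {φ : M.Q → E.Q} {c : Fin (w.length + 1) → E.Q}

theorem isHom (h : M.IsExpansionVia p w q E φ c) : M.IsHom E φ :=
  ⟨h.map_q0, fun _ _ _ he => (h.mem_iff _).2 (.inl ⟨_, he, rfl⟩)⟩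

theorem edge_mem (h : M.IsExpansionVia p w q E φ c) (i : Fin w.length) :
    (c i.castSucc, w.get i, c i.succ) ∈ E.E :=
  (h.mem_iff _).2 (.inr ⟨i, .inl rfl⟩)

theorem path (h : M.IsExpansionVia p w q E φ c) : E.Path (φ p) w (φ q) :=
  path_iff_exists_fin.2 ⟨c, h.c_zero, h.c_last, h.edge_mem⟩

theorem dual (hM : M.Dual) (h : M.IsExpansionVia p w q E φ c) : E.Dual := by
  refine dual_of_forall fun x a y he => ?_
  obtain ⟨e, he', ⟨⟩⟩ | ⟨i, ⟨⟨⟩⟩ | ⟨⟨⟩⟩⟩ := (h.mem_iff _).1 he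
  · exact h.isHom.2 _ _ _ ((hM _ _ _).1 he')
  · exact (h.mem_iff _).2 (.inr ⟨i, .inr rfl⟩)
  · rw [Ltr.inv_inv]
    exact h.edge_mem i

theorem finite_compl_range (h : M.IsExpansionVia p w q E φ c) : (Set.range φ)ᶜ.Finite :=
  (Set.finite_range c).subset fun x hx => (h.cover x).resolve_left hx

theorem eq_zero_or_eq_last (h : M.IsExpansionVia p w q E φ c) {i : Fin (w.length + 1)} {y : M.Q}
    (hi : c i = φ y) : i = 0 ∨ i = Fin.last _ := by
  by_contra! hne
  exact h.c_notMem_range i (Fin.pos_iff_ne_zero.2 hne.1) (Fin.lt_last_iff_ne_last.2 hne.2)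
    ⟨y, hi.symm⟩

theorem exists_extension {β : Type*} (h : M.IsExpansionVia p w q E φ c) {ψ : M.Q → β}
    {d : Fin (w.length + 1) → β} (hd₀ : d 0 = ψ p) (hdl : d (Fin.last _) = ψ q) :
    ∃ g : E.Q → β, g ∘ φ = ψ ∧ g ∘ c = d := by
  have hφc : ∀ i y, c i = φ y → d i = ψ y := by
    intro i y hi
    obtain rfl | rfl := h.eq_zero_or_eq_last hi
    · rw [hd₀, h.injective (h.c_zero.symm.trans hi)]
    · rw [hdl, h.injective (h.c_last.symm.trans hi)]
  have hval : ∀ x, ∃ z, (∀ y, φ y = x → ψ y = z) ∧ ∀ i, c i = x → d i = z := by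
    intro x
    by_cases hx : ∃ y, φ y = x
    · obtain ⟨y, rfl⟩ := hx
      exact ⟨ψ y, fun y' hy => by rw [h.injective hy], fun i hi => hφc i y hi⟩
    · obtain ⟨i, rfl⟩ := (h.cover x).resolve_left hx
      refine ⟨d i, fun y hy => absurd ⟨y, hy⟩ hx, fun j hji => ?_⟩
      have hi₀ : i ≠ 0 := by rintro rfl; exact hx ⟨p, h.c_zero.symm⟩
      have hil : i ≠ Fin.last _ := by rintro rfl; exact hx ⟨q, h.c_last.symm⟩
      rw [h.c_inj i j (Fin.pos_iff_ne_zero.2 hi₀) (Fin.lt_last_iff_ne_last.2 hil) hji.symm]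
  choose g hgφ hgc using hval
  exact ⟨g, funext fun y => (hgφ _ y rfl).symm, funext fun i => (hgc _ i rfl).symm⟩

theorem exists_lift {P : Autom A} {ψ : M.Q → P.Q} (h : M.IsExpansionVia p w q E φ c)
    (hP : P.Dual) (hψ : M.IsHom P ψ) (hpath : P.Path (ψ p) w (ψ q)) :
    ∃ g : E.Q → P.Q, E.IsHom P g ∧ g ∘ φ = ψ := by
  obtain ⟨d, hd₀, hdl, hd⟩ := path_iff_exists_fin.1 hpath
  obtain ⟨g, rfl, rfl⟩ := h.exists_extension hd₀ hdl
  refine ⟨g, ⟨h.map_q0 ▸ hψ.1, fun x a y he => ?_⟩, rfl⟩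
  obtain ⟨e, he', ⟨⟩⟩ | ⟨i, ⟨⟨⟩⟩ | ⟨⟨⟩⟩⟩ := (h.mem_iff _).1 he
  · exact hψ.2 _ _ _ he'
  · exact hd i
  · exact (hP _ _ _).1 (hd i)

theorem hom_ext {P : Autom A} {g₁ g₂ : E.Q → P.Q} (h : M.IsExpansionVia p w q E φ c)
    (hP : P.Deterministic) (h₁ : E.IsHom P g₁) (h₂ : E.IsHom P g₂) (heq : g₁ ∘ φ = g₂ ∘ φ) :
    g₁ = g₂ := by
  have hc : ∀ i, g₁ (c i) = g₂ (c i) := by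
    intro i
    induction i using Fin.induction with
    | zero => rw [h.c_zero]; exact congrFun heq p
    | succ i ih =>
      have he₁ := h₁.2 _ _ _ (h.edge_mem i)
      rw [ih] at he₁
      exact hP _ _ _ _ he₁ (h₂.2 _ _ _ (h.edge_mem i))
  funext x
  obtain ⟨y, rfl⟩ | ⟨i, rfl⟩ := h.cover x
  exacts [congrFun heq y, hc i]

theorem isPathAdjunction (hM : M.Dual) (h : M.IsExpansionVia p w q E φ c) :
    M.IsPathAdjunction p w q E φ where
  isHom := h.isHom
  dual := h.dual hM
  path := h.path
  exists_lift _ := h.exists_lift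
  hom_ext := h.hom_ext

end IsExpansionVia

theorem exists_isPathAdjunction_of_red1 {E : Autom A} (hM : M.Dual) (hE : M.IsExpansion p w q E)
    (hEK : Relation.ReflTransGen Red1 E K) :
    ∃ φ : M.Q → K.Q, M.IsPathAdjunction p w q K φ ∧ (collapsedSet φ).Finite := by
  obtain ⟨φ, c, hφ⟩ := hE.exists_via
  obtain ⟨π, hπ⟩ := exists_isFolding_of_red1 hEK
  refine ⟨π ∘ φ, (hφ.isPathAdjunction hM).comp_isFolding hπ, finite_collapsedSet_comp ?_ hπ.finite⟩
  simp [collapsedSet_eq_empty hφ.injective]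

/-! ### Expansions with the same universal property -/

theorem Isomorphic.mem_iff {φ : M.Q ≃ N.Q} (hφ : M.IsHom N φ) (hφ' : N.IsHom M φ.symm)
    {x y : M.Q} {a : Ltr A} : (φ x, a, φ y) ∈ N.E ↔ (x, a, y) ∈ M.E :=
  ⟨fun h => by simpa using hφ'.2 _ _ _ h, hφ.2 _ _ _⟩

theorem Isomorphic.red2 (h : Isomorphic M N) (hM : Red2 M K) : Red2 N K := by
  obtain ⟨f, hf, hf'⟩ := h
  obtain ⟨r, s, a, hs, h₁, h₂, honly, φ, hinj, hrange, hq0, hE⟩ := hM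
  refine ⟨f r, f s, a, ?_, hf.2 _ _ _ h₁, hf.2 _ _ _ h₂, ?_, f ∘ φ, f.injective.comp hinj, ?_,
    (congrArg f hq0).trans hf.1, fun e => (hE e).trans (mem_iff hf hf').symm⟩
  · rw [← hf.1]
    exact f.injective.ne hs
  · rintro ⟨x, b, y⟩ he hor
    obtain ⟨x, rfl⟩ := f.surjective x
    obtain ⟨y, rfl⟩ := f.surjective y
    simpa using honly (x, b, y) ((mem_iff hf hf').1 he) (by simpa using hor)
  · rw [Set.range_comp, hrange]
    ext z
    obtain ⟨z, rfl⟩ := f.surjective z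
    simp

theorem Isomorphic.exists_red2 (h : Isomorphic M N)
    (hM : Relation.ReflTransGen Red2 M K) (hK : ∀ L, ¬ Red2 K L) :
    ∃ L, Relation.ReflTransGen Red2 N L ∧ (∀ L', ¬ Red2 L L') ∧ Isomorphic L K := by
  obtain rfl | ⟨L, hML, hLK⟩ := hM.cases_head
  · exact ⟨N, .refl, fun L hL => hK L (h.symm.red2 hL), h.symm⟩
  · exact ⟨K, .head (h.red2 hML) hLK, hK, .refl K⟩

theorem ExpStep.congr {p₁ q₁ : M.Q} {w₁ : List (Ltr A)} (hM : M.Dual) (hw₁ : w₁ ≠ [])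
    (hpath : ∀ {P : Autom A} {ψ : M.Q → P.Q}, P.Deterministic → P.Dual → M.IsHom P ψ →
      (P.Path (ψ p) w (ψ q) ↔ P.Path (ψ p₁) w₁ (ψ q₁)))
    (h : M.ExpStep p w q N) : M.ExpStep p₁ w₁ q₁ N := by
  obtain ⟨E, R, hE, ⟨K, hEK, hK, hKR, hR⟩, hRN⟩ := h
  obtain ⟨φ, hφ, hφfin⟩ := exists_isPathAdjunction_of_red1 hM hE hEK
  have hφ₁ := hφ.congr hK hpath
  obtain ⟨E₁, hE₁⟩ := exists_isExpansion M p₁ q₁ hw₁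
  obtain ⟨ι, c, hι⟩ := hE₁.exists_via
  obtain ⟨g, hg, rfl⟩ := hι.exists_lift hφ₁.dual hφ₁.isHom hφ₁.path
  obtain ⟨K₁, hE₁K₁, hK₁⟩ := exists_red1_deterministic hK hg
    (finite_collapsedSet_of_comp hι.finite_compl_range hφfin)
  obtain ⟨φ₁, hφ₁', -⟩ := exists_isPathAdjunction_of_red1 hM hE₁ hE₁K₁
  obtain ⟨R₁, hK₁R₁, hR₁, hR₁R⟩ := (hφ₁.isomorphic hK hφ₁' hK₁).exists_red2 hKR hR
  exact ⟨E₁, R₁, hE₁, ⟨K₁, hE₁K₁, hK₁, hK₁R₁, hR₁⟩, hR₁R.trans hRN⟩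

theorem expStep_append_append_iff (hM : M.Dual) (hw : w ≠ []) (hu : M.Path p u p')
    (hv : M.Path q' v q) : M.ExpStep p (u ++ w ++ v) q N ↔ M.ExpStep p' w q' N := by
  have hpath {P : Autom A} {ψ : M.Q → P.Q} (hP : P.Deterministic) (hPdual : P.Dual)
      (hψ : M.IsHom P ψ) : P.Path (ψ p) (u ++ w ++ v) (ψ q) ↔ P.Path (ψ p') w (ψ q') :=
    path_append_append_iff hP hPdual (hu.map hψ) (hv.map hψ)
  exact ⟨.congr hM hw hpath, .congr hM (by simp [hw])
    fun hP hPdual hψ => (hpath hP hPdual hψ).symm⟩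

/-! ### Attaching a reduced path -/

/-- `M` with the transition `(p, a, q)` and its inverse added: paths are attached
letter by letter. -/
def addEdge (M : Autom A) (p : M.Q) (a : Ltr A) (q : M.Q) : Autom A where
  Q := M.Q
  q0 := M.q0
  E := {e | e ∈ M.E ∨ e = (p, a, q) ∨ e = (q, a.inv, p)}

theorem mem_addEdge {a b : Ltr A} {x y : M.Q} :
    (x, b, y) ∈ (M.addEdge p a q).E ↔
      (x, b, y) ∈ M.E ∨ (x = p ∧ b = a ∧ y = q) ∨ (x = q ∧ b = a.inv ∧ y = p) := by
  change _ ∨ (x, b, y) = (p, a, q) ∨ (x, b, y) = (q, a.inv, p) ↔ _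
  simp only [Prod.mk.injEq]

theorem addEdge_dual (hM : M.Dual) (p : M.Q) (a : Ltr A) (q : M.Q) : (M.addEdge p a q).Dual := by
  refine dual_of_forall fun (x : M.Q) b (y : M.Q) h => mem_addEdge.2 ?_
  obtain h | ⟨rfl, rfl, rfl⟩ | ⟨rfl, rfl, rfl⟩ := mem_addEdge.1 h
  · exact .inl ((hM _ _ _).1 h)
  · exact .inr (.inr ⟨rfl, rfl, rfl⟩)
  · exact .inr (.inl ⟨rfl, a.inv_inv, rfl⟩)

theorem addEdge_deterministic (hd : M.Deterministic) (hM : M.Dual) {a : Ltr A}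
    (hp : ∀ s, (p, a, s) ∉ M.E) (hq : ∀ s, (s, a, q) ∉ M.E) :
    (M.addEdge p a q).Deterministic := by
  have hq' : ∀ s, (q, a.inv, s) ∉ M.E := fun s h => hq s ((hM _ _ _).2 h)
  intro (x : M.Q) b (y : M.Q) (y' : M.Q) h h'
  replace h := mem_addEdge.1 h
  replace h' := mem_addEdge.1 h'
  obtain h | ⟨rfl, rfl, rfl⟩ | ⟨rfl, rfl, rfl⟩ := h
  · obtain h' | ⟨rfl, rfl, -⟩ | ⟨rfl, rfl, -⟩ := h'
    exacts [hd _ _ _ _ h h', absurd h (hp y), absurd h (hq' y)]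
  · obtain h' | ⟨-, -, rfl⟩ | ⟨-, h', -⟩ := h'
    exacts [absurd h' (hp y'), rfl, absurd h'.symm b.inv_ne]
  · obtain h' | ⟨-, h', -⟩ | ⟨-, -, rfl⟩ := h'
    exacts [absurd h' (hq' y'), absurd h' a.inv_ne, rfl]

theorem isHom_addEdge (M : Autom A) (p : M.Q) (a : Ltr A) (q : M.Q) :
    M.IsHom (M.addEdge p a q) id :=
  ⟨rfl, fun _ _ _ => .inl⟩

/-- `M` with an isolated state `none` added, from which `addLeaf` is built. -/
def addState (M : Autom A) : Autom A where
  Q := Option M.Q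
  q0 := some M.q0
  E := {e | ∃ x b y, (x, b, y) ∈ M.E ∧ e = (some x, b, some y)}

theorem addState_dual (hM : M.Dual) : M.addState.Dual := by
  refine dual_of_forall ?_
  rintro _ _ _ ⟨x, b, y, he, ⟨⟩⟩
  exact ⟨y, _, x, (hM _ _ _).1 he, rfl⟩

theorem addState_deterministic (hd : M.Deterministic) : M.addState.Deterministic := by
  rintro _ _ _ _ ⟨x, b, y, he, ⟨⟩⟩ ⟨x, b, z, he', ⟨⟩⟩
  exact congrArg some (hd _ _ _ _ he he')

theorem isHom_addState (M : Autom A) : M.IsHom M.addState some :=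
  ⟨rfl, fun _ _ _ h => ⟨_, _, _, h, rfl⟩⟩

/-- `M` with a new state `none` and a transition `(p, a, none)` added, along with its inverse: the
step that attaches the first letter of a path. -/
def addLeaf (M : Autom A) (p : M.Q) (a : Ltr A) : Autom A :=
  M.addState.addEdge (some p) a none

theorem mem_addLeaf {a b : Ltr A} {x y : Option M.Q} :
    (x, b, y) ∈ (M.addLeaf p a).E ↔
      (∃ x' y', (x', b, y') ∈ M.E ∧ x = some x' ∧ y = some y') ∨
        (x = some p ∧ b = a ∧ y = none) ∨ (x = none ∧ b = a.inv ∧ y = some p) := by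
  refine mem_addEdge.trans (or_congr_left ⟨?_, ?_⟩)
  · rintro ⟨x', b, y', he, ⟨⟩⟩
    exact ⟨x', y', he, rfl, rfl⟩
  · rintro ⟨x', y', he, rfl, rfl⟩
    exact ⟨x', b, y', he, rfl⟩

theorem addLeaf_dual (hM : M.Dual) (p : M.Q) (a : Ltr A) : (M.addLeaf p a).Dual :=
  addEdge_dual (addState_dual hM) _ _ _

theorem addLeaf_deterministic (hd : M.Deterministic) (hM : M.Dual) {a : Ltr A}
    (hp : ∀ s, (p, a, s) ∉ M.E) : (M.addLeaf p a).Deterministic := by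
  refine addEdge_deterministic (addState_deterministic hd) (addState_dual hM) ?_ ?_
  · rintro _ ⟨_, _, _, he, ⟨⟩⟩
    exact hp _ he
  · rintro _ ⟨_, _, _, _, ⟨⟩⟩

theorem isHom_addLeaf (M : Autom A) (p : M.Q) (a : Ltr A) : M.IsHom (M.addLeaf p a) some :=
  (isHom_addEdge M.addState _ _ _).comp (isHom_addState M)

/-- `M` embeds in a deterministic dual automaton in which `w` labels a path from `p` to `q`. By
universality, folding the expansion by `(p, w, q)` then identifies no states of `M`. -/
def HasPathExtension (M : Autom A) (p : M.Q) (w : List (Ltr A)) (q : M.Q) : Prop :=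
  ∃ (P : Autom A) (ψ : M.Q → P.Q), P.Deterministic ∧ P.Dual ∧ M.IsHom P ψ ∧ Injective ψ ∧
    P.Path (ψ p) w (ψ q)

theorem hasPathExtension_singleton (hd : M.Deterministic) (hM : M.Dual) {a : Ltr A}
    (hp : ∀ s, (p, a, s) ∉ M.E) (hq : ∀ s, (s, a, q) ∉ M.E) : M.HasPathExtension p [a] q :=
  ⟨M.addEdge p a q, id, addEdge_deterministic hd hM hp hq, addEdge_dual hM p a q,
    isHom_addEdge M p a q, injective_id,
    path_singleton.2 (mem_addEdge.2 (.inr (.inl ⟨rfl, rfl, rfl⟩)))⟩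

theorem HasPathExtension.append_of_path {r : M.Q} (h : M.HasPathExtension p u r)
    (hv : M.Path r v q) : M.HasPathExtension p (u ++ v) q :=
  let ⟨P, ψ, hP, hPdual, hψ, hinj, hu⟩ := h
  ⟨P, ψ, hP, hPdual, hψ, hinj, hu.append (hv.map hψ)⟩

theorem HasPathExtension.of_addLeaf {a : Ltr A}
    (h : (M.addLeaf p a).HasPathExtension none w (some q)) : M.HasPathExtension p (a :: w) q :=
  let ⟨P, ψ, hP, hPdual, hψ, hinj, hw⟩ := h
  ⟨P, ψ ∘ some, hP, hPdual, hψ.comp (isHom_addLeaf M p a), hinj.comp (Option.some_injective _),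
    .cons (hψ.2 _ _ _ (mem_addLeaf.2 (.inr (.inl ⟨rfl, rfl, rfl⟩)))) hw⟩

theorem notMem_addLeaf_of_mem_head? {a b : Ltr A} (hred : IsReducedWord (a :: w))
    (hb : b ∈ w.head?) (s : Option M.Q) : (none, b, s) ∉ (M.addLeaf p a).E := by
  obtain ⟨y, rfl⟩ := List.head?_eq_some_iff.1 hb
  intro hs
  obtain ⟨_, _, _, ⟨⟩, -⟩ | ⟨⟨⟩, -⟩ | ⟨-, rfl, -⟩ := mem_addLeaf.1 hs
  exact hred.ne_inv (x := []) rfl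

theorem notMem_addLeaf_of_mem_getLast? {a b : Ltr A} (hred : IsReducedWord (w ++ [a.inv]))
    (hb : b ∈ w.getLast?) (s : Option M.Q) : (s, b, none) ∉ (M.addLeaf p a).E := by
  obtain ⟨y, rfl⟩ := List.getLast?_eq_some_iff.1 hb
  intro hs
  obtain ⟨_, _, _, -, ⟨⟩⟩ | ⟨-, rfl, -⟩ | ⟨-, -, ⟨⟩⟩ := mem_addLeaf.1 hs
  exact IsReducedWord.ne_inv (by simpa using hred) rfl

theorem hasPathExtension_of_isReducedWord (hd : M.Deterministic) (hM : M.Dual) (hw : w ≠ [])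
    (hred : IsReducedWord w) (hhead : ∀ a ∈ w.head?, ∀ s, (p, a, s) ∉ M.E)
    (hlast : ∀ a ∈ w.getLast?, ∀ s, (s, a, q) ∉ M.E) : M.HasPathExtension p w q := by
  induction hn : w.length using Nat.strong_induction_on generalizing M w with
  | _ n ih =>
    obtain ⟨a, t, rfl⟩ := List.exists_cons_of_ne_nil hw
    replace hhead := hhead a rfl
    obtain rfl | ⟨t, l, rfl⟩ := t.eq_nil_or_concat'
    · exact hasPathExtension_singleton hd hM hhead (hlast a rfl)
    replace hlast := hlast l (List.getLast?_concat (l := a :: t))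
    have hLdet := addLeaf_deterministic hd hM hhead
    have hLdual := addLeaf_dual hM p a
    refine .of_addLeaf ?_
    by_cases hl : ∀ s, (s, l, some q) ∉ (M.addLeaf p a).E
    · refine ih (t ++ [l]).length (by simp [← hn]) hLdet hLdual (by simp)
        (hred.of_isInfix (List.infix_cons (List.infix_refl _))) ?_ ?_ rfl
      · exact fun b hb => notMem_addLeaf_of_mem_head? hred hb
      · intro b hb
        obtain rfl : l = b := by simpa using hb
        exact hl
    -- Otherwise the last transition is the inverse of the leaf's, and only `t` has to be attached.
    push Not at hl
    obtain ⟨s, hs⟩ := hl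
    obtain ⟨x', y', he, rfl, ⟨⟩⟩ | ⟨-, -, ⟨⟩⟩ | ⟨rfl, rfl, ⟨⟩⟩ := mem_addLeaf.1 hs
    · exact absurd he (hlast _)
    have ht : t ≠ [] := by
      rintro rfl
      exact hred.ne_inv (x := []) rfl
    refine .append_of_path (ih t.length (by simp [← hn]) hLdet hLdual ht
      (hred.of_isInfix ⟨[a], [a.inv], by simp⟩) ?_ ?_ rfl) (path_singleton.2 hs)
    · exact fun b hb => notMem_addLeaf_of_mem_head? (hred.of_isInfix ⟨[], [a.inv], rfl⟩) hb
    · exact fun b hb =>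
        notMem_addLeaf_of_mem_getLast? (hred.of_isInfix (List.infix_cons (List.infix_refl _))) hb

/-! ### Reduced expansions -/

/-- `M` embeds in `N`, as in the definition of a reduced expansion; for reduced `M`, this survives
type 2 reductions of `N`. -/
def EmbedsIn (M N : Autom A) : Prop := ∃ ψ : M.Q → N.Q, Injective ψ ∧ M.IsHom N ψ

theorem IsRed.exists_edges_ne_inv (hM : M.IsRed) {x : M.Q} (hx : x ≠ M.q0) :
    ∃ y b c z, (y, b, x) ∈ M.E ∧ (x, c, z) ∈ M.E ∧ c ≠ b.inv := by
  obtain ⟨u, v, hred, hu, hv⟩ := hM x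
  obtain rfl | ⟨u, b, rfl⟩ := u.eq_nil_or_concat'
  · cases hu
    exact absurd rfl hx
  obtain _ | ⟨hc, -⟩ := hv
  · exact absurd rfl hx
  obtain ⟨y, -, hb⟩ := path_append.1 hu
  exact ⟨y, b, _, _, path_singleton.1 hb, hc, IsReducedWord.ne_inv (by simpa using hred)⟩

theorem IsRed.map_ne_of_leaf {φ : M.Q → N.Q} {r s : N.Q} {a : Ltr A} (hM : M.IsRed)
    (hφ : M.IsHom N φ) (hinj : Injective φ) (hs : s ≠ N.q0)
    (honly : ∀ e ∈ N.E, e.1 = s ∨ e.2.2 = s → e = (r, a, s) ∨ e = (s, a.inv, r)) (x : M.Q) :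
    φ x ≠ s := by
  rintro rfl
  have hx : x ≠ M.q0 := by
    rintro rfl
    exact hs hφ.1
  have hr : r ≠ φ x := by
    obtain ⟨_, _, -, hpath, -⟩ := hM x
    obtain ⟨y, b, hyx, hb⟩ := hpath.exists_edge_ne hx.symm
    obtain h | h := honly _ (hφ.2 _ _ _ hb) (.inr rfl)
    · exact (congrArg (·.1) h).symm.trans_ne (hinj.ne hyx)
    · exact absurd (congrArg (·.1) h) (hinj.ne hyx)
  obtain ⟨y, b, c, z, hb, hc, hbc⟩ := hM.exists_edges_ne_inv hx
  have hba : b = a := by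
    obtain h | h := honly _ (hφ.2 _ _ _ hb) (.inr rfl)
    · exact congrArg (·.2.1) h
    · exact absurd (congrArg (·.2.2) h).symm hr
  have hca : c = a.inv := by
    obtain h | h := honly _ (hφ.2 _ _ _ hc) (.inl rfl)
    · exact absurd (congrArg (·.1) h).symm hr
    · exact congrArg (·.2.1) h
  exact hbc (hba ▸ hca)

theorem EmbedsIn.red2 (hM : M.IsRed) (h : M.EmbedsIn N) (hN : Red2 N K) : M.EmbedsIn K := by
  obtain ⟨φ, hφinj, hφ⟩ := h
  obtain ⟨r, s, a, hs, -, -, honly, σ, hσinj, hrange, hq0, hE⟩ := hN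
  have hφs := hM.map_ne_of_leaf hφ hφinj hs honly
  choose ψ hψ using fun x => hrange.ge (hφs x)
  refine ⟨ψ, .of_comp (f := σ) ?_, hσinj ?_, fun x a y he => (hE _).2 ?_⟩
  · rwa [funext hψ (f := σ ∘ ψ)]
  · rw [hψ, hq0, hφ.1]
  · simpa only [hψ] using hφ.2 _ _ _ he

theorem EmbedsIn.reflTransGen_red2 (hM : M.IsRed) (h : M.EmbedsIn N)
    (hN : Relation.ReflTransGen Red2 N K) : M.EmbedsIn K := by
  induction hN with
  | refl => exact h
  | tail _ hL ih => exact ih.red2 hM hL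

theorem EmbedsIn.of_isomorphic (h : M.EmbedsIn N) (hN : Isomorphic N K) : M.EmbedsIn K :=
  let ⟨φ, hφinj, hφ⟩ := h
  let ⟨f, hf, _⟩ := hN
  ⟨f ∘ φ, f.injective.comp hφinj, hf.comp hφ⟩

theorem ExpStep.reStep (hd : M.Deterministic) (hM : M.Dual) (hMred : M.IsRed)
    (hw : IsReducedWord w) (hhead : ∀ a ∈ w.head?, ∀ s, (p, a, s) ∉ M.E)
    (hlast : ∀ a ∈ w.getLast?, ∀ s, (s, a, q) ∉ M.E) (h : M.ExpStep p w q N) :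
    M.REStep p w q N := by
  refine ⟨h, ?_⟩
  obtain ⟨E, R, hE, ⟨K, hEK, -, hKR, -⟩, hRN⟩ := h
  obtain ⟨φ, hφ, -⟩ := exists_isPathAdjunction_of_red1 hM hE hEK
  obtain ⟨P, ψ, hP, hPdual, hψ, hinj, hpath⟩ :=
    hasPathExtension_of_isReducedWord hd hM hE.1 hw hhead hlast
  obtain ⟨g, -, rfl⟩ := hφ.exists_lift hP hPdual hψ hpath
  exact (EmbedsIn.reflTransGen_red2 hMred ⟨φ, hinj.of_comp, hφ.isHom⟩ hKR).of_isomorphic hRN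

end Autom

/-- Fact 2.2 (1): if `w = u w' v` where `u` is the longest prefix of `w` readable
from `p` and `v` the longest suffix readable into `q`, and `w'` is nonempty, then
`M →exp^{(p,w,q)} N` iff `M →exp^{(p',w',q')} N`, and the latter is a reduced
expansion. -/
theorem expstep_case_reduced_expansion
    {A : Type} (M : Autom A) (hMinv : M.IsInv) (hMred : M.IsRed)
    (p q : M.Q) (w u v w' : List (Ltr A)) (hw : w ≠ []) (hwred : IsReducedWord w)
    (hsplit : w = u ++ w' ++ v) (hw' : w' ≠ [])
    (p' q' : M.Q) (hu : M.Path p u p') (hv : M.Path q' v q)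
    (humax : ∀ u₁, u₁ <+: w → (∃ s, M.Path p u₁ s) → u₁.length ≤ u.length)
    (hvmax : ∀ v₁, v₁ <:+ w → (∃ s, M.Path s v₁ q) → v₁.length ≤ v.length)
    (N : Autom A) (hNinv : N.IsInv) (hNred : N.IsRed) :
    (M.ExpStep p w q N ↔ M.ExpStep p' w' q' N) ∧
      (M.ExpStep p' w' q' N → M.REStep p' w' q' N) := by
  subst hsplit
  have hhead : ∀ a ∈ w'.head?, ∀ s, (p', a, s) ∉ M.E := by
    intro a ha s hs
    obtain ⟨t, rfl⟩ := List.head?_eq_some_iff.1 ha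
    simpa using humax (u ++ [a]) ⟨t ++ v, by simp⟩ ⟨s, hu.append (Autom.path_singleton.2 hs)⟩
  have hlast : ∀ a ∈ w'.getLast?, ∀ s, (s, a, q') ∉ M.E := by
    intro a ha s hs
    obtain ⟨t, rfl⟩ := List.getLast?_eq_some_iff.1 ha
    simpa using hvmax ([a] ++ v) ⟨u ++ t, by simp⟩ ⟨s, (Autom.path_singleton.2 hs).append hv⟩
  exact ⟨Autom.expStep_append_append_iff hMinv.2.2 hw' hu hv,
    Autom.ExpStep.reStep hMinv.1 hMinv.2.2 hMred (hwred.of_isInfix ⟨u, v, rfl⟩) hhead hlast⟩
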